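/- arXiv:math/9807077 — 2 statements merged into one kernel-verified Lean document; each statement's English description precedes it below -/
import Mathlib

section
/- Let V be a vertex operator algebra and W a weak V-module. For u, v ∈ V, the adjoint vertex operators Y*(u,x) on the full dual space W*, defined by ⟨Y*(v,x)α, w⟩ = ⟨α, Y(e^{xL(1)}(−x^{−2})^{L(0)}v, x^{−1})w⟩, satisfy the commutator formula [Y*(u,x₁), Y*(v,x₂)] = Res_{x₀} x₂^{−1} δ((x₁−x₀)/x₂) Y*(Y(u,x₀)v, x₂) as formal operator series on W*, and moreover Y*(L(−1)v, x) = (d/dx)Y*(v,x). -/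
noncomputable section

/-- The generalized binomial coefficient `C(m, i)` for `m ∈ ℤ`, `i ∈ ℕ`,
as a complex number: `m(m-1)⋯(m-i+1)/i!`. -/
def cchoose (m : ℤ) (i : ℕ) : ℂ :=
  (∏ j ∈ Finset.range i, ((m : ℂ) - (j : ℂ))) / (Nat.factorial i : ℂ)

/-- A vertex operator algebra `V = ⊕ₙ V₍ₙ₎` over `ℂ`.  The vertex operator map is
recorded through its modes `op u n v = uₙ v` (so `Y(u,x)v = Σₙ uₙv x^{-n-1}`), with
vacuum `one`, conformal vector `omega` (with `L(k) = ω_{k+1}`), central charge `cc`,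
weight grading `wtSpace` with projections `proj`.  The Jacobi identity is recorded in
the equivalent form of the Borcherds identity on modes. -/
structure VOA where
  carrier : Type
  [grp : AddCommGroup carrier]
  [mdl : Module ℂ carrier]
  op : carrier → ℤ → carrier → carrier
  one : carrier
  omega : carrier
  wtSpace : ℤ → Submodule ℂ carrier
  proj : ℤ → carrier → carrier
  cc : ℂ
  op_linear_left : ∀ (n : ℤ) (w : carrier), IsLinearMap ℂ fun u => op u n w
  op_linear_right : ∀ (u : carrier) (n : ℤ), IsLinearMap ℂ (op u n)
  trunc : ∀ u v : carrier, ∃ N : ℤ, ∀ n : ℤ, N ≤ n → op u n v = 0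
  one_op : ∀ (n : ℤ) (v : carrier), op one n v = if n = -1 then v else 0
  create_nonneg : ∀ (v : carrier) (n : ℤ), 0 ≤ n → op v n one = 0
  create : ∀ v : carrier, op v (-1) one = v
  borcherds : ∀ (u v w : carrier) (l m n : ℤ),
    (∑ᶠ i : ℕ, cchoose m i • op (op u (l + (i : ℤ)) v) (m + n - (i : ℤ)) w)
      = ∑ᶠ i : ℕ, ((-1 : ℂ) ^ i * cchoose l i) •
          (op u (l + m - (i : ℤ)) (op v (n + (i : ℤ)) w)
            - ((-1 : ℂ) ^ l) • op v (l + n - (i : ℤ)) (op u (m + (i : ℤ)) w))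
  proj_linear : ∀ n : ℤ, IsLinearMap ℂ (proj n)
  proj_mem : ∀ (n : ℤ) (v : carrier), proj n v ∈ wtSpace n
  proj_eq : ∀ n : ℤ, ∀ v ∈ wtSpace n, proj n v = v
  proj_ne : ∀ m n : ℤ, m ≠ n → ∀ v ∈ wtSpace m, proj n v = 0
  proj_finite : ∀ v : carrier, (Function.support fun n => proj n v).Finite
  proj_sum : ∀ v : carrier, (∑ᶠ n : ℤ, proj n v) = v
  fd : ∀ n : ℤ, FiniteDimensional ℂ (wtSpace n)
  lower_trunc : ∃ N : ℤ, ∀ n : ℤ, n < N → wtSpace n = ⊥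
  one_wt : one ∈ wtSpace 0
  omega_wt : omega ∈ wtSpace 2
  op_wt : ∀ k m n : ℤ, ∀ u ∈ wtSpace k, ∀ v ∈ wtSpace m, op u n v ∈ wtSpace (k + m - n - 1)
  L_zero : ∀ n : ℤ, ∀ v ∈ wtSpace n, op omega 1 v = (n : ℂ) • v
  L_neg_one : ∀ (u : carrier) (n : ℤ) (w : carrier),
    op (op omega 0 u) n w = (-(n : ℂ)) • op u (n - 1) w
  virasoro : ∀ (m n : ℤ) (v : carrier),
    op omega (m + 1) (op omega (n + 1) v) - op omega (n + 1) (op omega (m + 1) v)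
      = ((m : ℂ) - (n : ℂ)) • op omega (m + n + 1) v
        + (if m + n = 0 then (((m : ℂ) ^ 3 - (m : ℂ)) / 12) * cc else 0) • v

attribute [instance] VOA.grp VOA.mdl

namespace VOA

variable (V : VOA)

/-- The Virasoro operator `L(k) = ω_{k+1}`. -/
def L (k : ℤ) (v : V.carrier) : V.carrier := V.op V.omega (k + 1) v

/-- The positive-weight part `V₊ = ⊕_{n ≥ 1} V₍ₙ₎`. -/
def pos : Submodule ℂ V.carrier := ⨆ (n : ℤ) (_ : 1 ≤ n), V.wtSpace n

/-- Zhu's subspace `C₂(V) = span{u₋₂v : u, v ∈ V}`. -/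
def C2 : Submodule ℂ V.carrier :=
  Submodule.span ℂ {x : V.carrier | ∃ u v : V.carrier, x = V.op u (-2) v}

/-- The subspace `C₁(V) = span(v₋₁V₊ (v ∈ V₊) together with L(-1)V)`. -/
def C1 : Submodule ℂ V.carrier :=
  Submodule.span ℂ
    ({x : V.carrier | ∃ u ∈ V.pos, ∃ v ∈ V.pos, x = V.op u (-1) v}
      ∪ {x : V.carrier | ∃ v : V.carrier, x = V.op V.omega 0 v})

/-- Iterated application of modes: `iterApply [(u¹,n₁),…,(uʳ,n_r)] w = u¹_{n₁} ⋯ uʳ_{n_r} w`. -/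
def iterApply : List (V.carrier × ℤ) → V.carrier → V.carrier
  | [], w => w
  | p :: l, w => V.op p.1 p.2 (iterApply l w)

/-- `U ⊆ V` generates `V` as a vertex operator algebra:  `V` is linearly spanned by
the elements `u¹_{n₁} ⋯ uʳ_{n_r} 1` with `uⁱ ∈ U`, `n_i ∈ ℤ`. -/
def generates (U : Set V.carrier) : Prop :=
  Submodule.span ℂ {x : V.carrier | ∃ l : List (V.carrier × ℤ),
    (∀ p ∈ l, p.1 ∈ U) ∧ x = V.iterApply l V.one} = ⊤

/-- `V` is finitely generated as a vertex operator algebra. -/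
def FinitelyGenerated : Prop := ∃ S : Finset V.carrier, V.generates ↑S

end VOA

/-- A weak `V`-module: all axioms of a module (truncation, vacuum, Jacobi identity in
Borcherds form) except those involving gradings. -/
structure WeakModule (V : VOA) where
  carrier : Type
  [grp : AddCommGroup carrier]
  [mdl : Module ℂ carrier]
  op : V.carrier → ℤ → carrier → carrier
  op_linear_left : ∀ (n : ℤ) (w : carrier), IsLinearMap ℂ fun u => op u n w
  op_linear_right : ∀ (u : V.carrier) (n : ℤ), IsLinearMap ℂ (op u n)
  trunc : ∀ (u : V.carrier) (w : carrier), ∃ N : ℤ, ∀ n : ℤ, N ≤ n → op u n w = 0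
  one_op : ∀ (n : ℤ) (w : carrier), op V.one n w = if n = -1 then w else 0
  borcherds : ∀ (u v : V.carrier) (w : carrier) (l m n : ℤ),
    (∑ᶠ i : ℕ, cchoose m i • op (V.op u (l + (i : ℤ)) v) (m + n - (i : ℤ)) w)
      = ∑ᶠ i : ℕ, ((-1 : ℂ) ^ i * cchoose l i) •
          (op u (l + m - (i : ℤ)) (op v (n + (i : ℤ)) w)
            - ((-1 : ℂ) ^ l) • op v (l + n - (i : ℤ)) (op u (m + (i : ℤ)) w))

attribute [instance] WeakModule.grp WeakModule.mdl

namespace WeakModule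

variable {V : VOA} (W : WeakModule V)

/-- `L(0)` acting on a weak module, as a linear map. -/
def L0 : W.carrier →ₗ[ℂ] W.carrier := IsLinearMap.mk' _ (W.op_linear_right V.omega 1)

/-- The `L(0)`-eigenspace of eigenvalue `h`. -/
def eig (h : ℂ) : Submodule ℂ W.carrier :=
  LinearMap.ker (W.L0 - h • (LinearMap.id : W.carrier →ₗ[ℂ] W.carrier))

/-- The coefficient `v*ₙ` of the adjoint vertex operator
`⟨Y*(v,x)α, w⟩ = ⟨α, Y(e^{xL(1)}(-x^{-2})^{L(0)}v, x^{-1})w⟩` acting on the full dual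
space: for `v` homogeneous of weight `h`,
`(v*ₙ α)(w) = (-1)^h Σ_{i≥0} (1/i!) α((L(1)^i v)_{2h-n-i-2} w)`, extended to general
`v` via the weight-space projections. -/
def dmode (v : V.carrier) (n : ℤ) (α : W.carrier → ℂ) (w : W.carrier) : ℂ :=
  ∑ᶠ h : ℤ, ∑ᶠ i : ℕ,
    ((-1 : ℂ) ^ h / (Nat.factorial i : ℂ)) *
      α (W.op ((V.L 1)^[i] (V.proj h v)) (2 * h - n - (i : ℤ) - 2) w)

/-- `D(W) ⊆ W*`: the linear functionals `α` on `W` such that for every `v ∈ V`,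
`Y*(v,x)α ∈ W*((x))`, i.e. `v*ₙ α = 0` for `n` sufficiently large. -/
def DW : Set (W.carrier → ℂ) :=
  {α | IsLinearMap ℂ α ∧
    ∀ v : V.carrier, ∃ N : ℤ, ∀ n : ℤ, N ≤ n → ∀ w : W.carrier, W.dmode v n α w = 0}

/-- A subspace stable under all modes of all vertex operators, i.e. a `V`-submodule. -/
def IsStable (S : Submodule ℂ W.carrier) : Prop :=
  ∀ (v : V.carrier) (n : ℤ), ∀ m ∈ S, W.op v n m ∈ S

/-- An irreducible (nonzero, no proper nonzero stable subspaces) `V`-submodule. -/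
def IsIrreducibleSub (S : Submodule ℂ W.carrier) : Prop :=
  S ≠ ⊥ ∧ W.IsStable S ∧
    ∀ T : Submodule ℂ W.carrier, W.IsStable T → T ≤ S → T = ⊥ ∨ T = S

/-- A stable subspace which is an ordinary module: `L(0)` acts semisimply on it with
finite-dimensional eigenspaces, and for each `h` the eigenvalues `h + m` do not occur
for `m` a sufficiently negative integer. -/
def IsOrdinarySub (S : Submodule ℂ W.carrier) : Prop :=
  S ≤ (⨆ h : ℂ, W.eig h ⊓ S) ∧ (∀ h : ℂ, FiniteDimensional ℂ ↥(W.eig h ⊓ S)) ∧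
    ∀ h : ℂ, ∃ N : ℤ, ∀ m : ℤ, m ≤ N → W.eig (h + (m : ℂ)) ⊓ S = ⊥

/-- The weak module `W` is irreducible. -/
def IsIrreducible : Prop :=
  (⊥ : Submodule ℂ W.carrier) ≠ ⊤ ∧
    ∀ S : Submodule ℂ W.carrier, W.IsStable S → S = ⊥ ∨ S = ⊤

/-- `Cₙ(W) = span{v₋ₙw : v ∈ V, w ∈ W}`. -/
def Cn (n : ℤ) : Submodule ℂ W.carrier :=
  Submodule.span ℂ {x : W.carrier | ∃ (v : V.carrier) (w : W.carrier), x = W.op v (-n) w}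

/-- `B(W) = span(u₋₁W (u ∈ V₊) together with v₀W (v homogeneous, wt v ≥ 2))`. -/
def BW : Submodule ℂ W.carrier :=
  Submodule.span ℂ
    ({x : W.carrier | ∃ v ∈ V.pos, ∃ w : W.carrier, x = W.op v (-1) w}
      ∪ {x : W.carrier | ∃ k : ℤ, 2 ≤ k ∧ ∃ v ∈ V.wtSpace k, ∃ w : W.carrier, x = W.op v 0 w})

/-- Zhu's subspace `O(W) = span{Σ_{i≥0} C(wt v, i) v_{i-2} w}` so that `A(W) = W/O(W)`. -/
def OW : Submodule ℂ W.carrier :=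
  Submodule.span ℂ
    {x : W.carrier | ∃ (k : ℤ) (v : V.carrier), v ∈ V.wtSpace k ∧
      ∃ w : W.carrier, x = ∑ᶠ i : ℕ, cchoose k i • W.op v ((i : ℤ) - 2) w}

/-- A subspace `T ⊇ O(W)` of `W` is closed under the Frenkel–Zhu left and right
`A(V)`-actions `v * w = Σᵢ C(wt v, i) v_{i-1} w` and `w * v = Σᵢ C(wt v - 1, i) v_{i-1} w`;
for `T ⊇ O(W)` this expresses that `T/O(W)` is an `A(V)`-sub-bimodule of `A(W)`. -/
def BimoduleClosed (T : Submodule ℂ W.carrier) : Prop :=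
  ∀ k : ℤ, ∀ v ∈ V.wtSpace k, ∀ w ∈ T,
    (∑ᶠ i : ℕ, cchoose k i • W.op v ((i : ℤ) - 1) w) ∈ T ∧
    (∑ᶠ i : ℕ, cchoose (k - 1) i • W.op v ((i : ℤ) - 1) w) ∈ T

/-- Equivalence (isomorphism) of weak modules. -/
def Equiv (M N : WeakModule V) : Prop :=
  ∃ e : M.carrier ≃ₗ[ℂ] N.carrier,
    ∀ (v : V.carrier) (n : ℤ) (w : M.carrier), e (M.op v n w) = N.op v n (e w)

end WeakModule

/-- `V` is of class 𝒜: `L(0)` acts semisimply on every weak `V`-module. -/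
def VOA.classA (V : VOA) : Prop :=
  ∀ M : WeakModule V, (⨆ h : ℂ, M.eig h) = ⊤

/-- `V` is regular: every weak `V`-module is a direct sum of irreducible ordinary
`V`-modules. -/
def VOA.regular (V : VOA) : Prop :=
  ∀ M : WeakModule V, ∃ (ι : Type) (S : ι → Submodule ℂ M.carrier),
    (∀ i, M.IsIrreducibleSub (S i) ∧ M.IsOrdinarySub (S i)) ∧
    (∀ i, Disjoint (S i) (⨆ (j : ι) (_ : j ≠ i), S j)) ∧ (⨆ i, S i) = ⊤

/-- A generalized `V`-module: a weak module with a semisimple `L(0)`-action, graded by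
the `L(0)`-eigenvalues, with weight-space projections `projW`. -/
structure GenModule (V : VOA) extends WeakModule V where
  wt : ℂ → Submodule ℂ carrier
  projW : ℂ → carrier → carrier
  projW_linear : ∀ h : ℂ, IsLinearMap ℂ (projW h)
  projW_mem : ∀ (h : ℂ) (w : carrier), projW h w ∈ wt h
  projW_eq : ∀ h : ℂ, ∀ w ∈ wt h, projW h w = w
  projW_ne : ∀ g h : ℂ, g ≠ h → ∀ w ∈ wt g, projW h w = 0
  projW_finite : ∀ w : carrier, (Function.support fun h => projW h w).Finite
  projW_sum : ∀ w : carrier, (∑ᶠ h : ℂ, projW h w) = w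
  wt_L0 : ∀ h : ℂ, ∀ w ∈ wt h, op V.omega 1 w = h • w
  wt_op : ∀ k : ℤ, ∀ v ∈ V.wtSpace k, ∀ (h : ℂ) (n : ℤ), ∀ w ∈ wt h,
    op v n w ∈ wt (h + (k : ℂ) - (n : ℂ) - 1)

/-- An ordinary `V`-module: a generalized module whose weight spaces are
finite-dimensional and whose weights are truncated from below in each coset `h + ℤ`. -/
structure OrdModule (V : VOA) extends GenModule V where
  wt_fd : ∀ h : ℂ, FiniteDimensional ℂ ↥(wt h)
  wt_lower : ∀ h : ℂ, ∃ N : ℤ, ∀ m : ℤ, m ≤ N → wt (h + (m : ℂ)) = ⊥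

namespace GenModule

variable {V : VOA} (W : GenModule V)

/-- `W₊ = ⊕_{Re h > 0} W₍ₕ₎`. -/
def posW : Submodule ℂ W.carrier := ⨆ (h : ℂ) (_ : 0 < h.re), W.wt h

/-- `C₁(W) = span(v₋₁W₊ (v ∈ V₊) together with L(-1)W)`. -/
def C1W : Submodule ℂ W.carrier :=
  Submodule.span ℂ
    ({x : W.carrier | ∃ v ∈ V.pos, ∃ w ∈ W.posW, x = W.op v (-1) w}
      ∪ {x : W.carrier | ∃ w : W.carrier, x = W.op V.omega 0 w})

/-- The restricted dual `W' = ⊕ₕ W₍ₕ₎* ⊆ W*`: the linear functionals vanishing on all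
but finitely many weight spaces. -/
def restrictedDual : Set (W.carrier → ℂ) :=
  {α | IsLinearMap ℂ α ∧ {h : ℂ | ∃ w ∈ W.wt h, α w ≠ 0}.Finite}

end GenModule

/-- `D(W)⁰`: the sum of the `L(0)`-eigenspaces of the weak module `D(W) ⊆ W*`, where
`L*(0) = ω*₁` acts on `α ∈ W*` by `(L*(0)α)(w) = α(L(0)w)`. -/
def OrdModule.DW0 {V : VOA} (W : OrdModule V) : Set (W.carrier → ℂ) :=
  {α | ∃ (S : Finset ℂ) (f : ℂ → (W.carrier → ℂ)),
    (∀ h ∈ S, f h ∈ W.toWeakModule.DW ∧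
      ∀ w : W.carrier, f h (W.op V.omega 1 w) = h * f h w) ∧
    α = ∑ h ∈ S, f h}

/-- An ℕ-gradable weak `V`-module: a weak module with an ℕ-grading
`W = ⊕_{n∈ℕ} W(n)` with `v_m W(n) ⊆ W(wt v + n - m - 1)` (graded pieces of negative
index are zero). -/
structure NGradedModule (V : VOA) extends WeakModule V where
  gr : ℤ → Submodule ℂ carrier
  gr_neg : ∀ n : ℤ, n < 0 → gr n = ⊥
  gr_sup : (⨆ n : ℤ, gr n) = ⊤
  gr_indep : ∀ n : ℤ, Disjoint (gr n) (⨆ (m : ℤ) (_ : m ≠ n), gr m)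
  gr_op : ∀ k : ℤ, ∀ v ∈ V.wtSpace k, ∀ m n : ℤ, ∀ w ∈ gr n,
    op v m w ∈ gr (k + n - m - 1)

/-- An intertwining operator of type `(W₃; W₁ W₂)` in the sense of
Frenkel–Huang–Lepowsky, recorded through its complex-indexed modes
`I w₁ h w₂ = (w₁)ₕ w₂` (so `Y(w₁,x)w₂ = Σ_{h∈ℂ} (w₁)ₕ w₂ x^{-h-1}`):
linearity, truncation, the `L(-1)`-derivative property, and the Jacobi identity in
component (Borcherds) form. -/
def IsIntertwiner {V : VOA} (W1 W2 W3 : OrdModule V)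
    (I : W1.carrier → ℂ → W2.carrier → W3.carrier) : Prop :=
  (∀ (h : ℂ) (w2 : W2.carrier), IsLinearMap ℂ fun w1 => I w1 h w2) ∧
  (∀ (w1 : W1.carrier) (h : ℂ), IsLinearMap ℂ (I w1 h)) ∧
  (∀ (w1 : W1.carrier) (w2 : W2.carrier) (h : ℂ),
    ∃ N : ℤ, ∀ n : ℤ, N ≤ n → I w1 (h + (n : ℂ)) w2 = 0) ∧
  (∀ (w1 : W1.carrier) (h : ℂ) (w2 : W2.carrier),
    I (W1.op V.omega 0 w1) h w2 = (-h) • I w1 (h - 1) w2) ∧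
  (∀ (u : V.carrier) (w1 : W1.carrier) (w2 : W2.carrier) (l m : ℤ) (h : ℂ),
    (∑ᶠ i : ℕ, cchoose m i • I (W1.op u (l + (i : ℤ)) w1) ((m : ℂ) + h - (i : ℂ)) w2)
      = ∑ᶠ i : ℕ, ((-1 : ℂ) ^ i * cchoose l i) •
          (W3.op u (l + m - (i : ℤ)) (I w1 (h + (i : ℂ)) w2)
            - ((-1 : ℂ) ^ l) • I w1 ((l : ℂ) + h - (i : ℂ)) (W2.op u (m + (i : ℤ)) w2)))

/-- The fusion rule `dim I(W₃; W₁W₂)` is finite: the space of intertwining operators of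
the indicated type is finite-dimensional. -/
def FusionFinite {V : VOA} (W1 W2 W3 : OrdModule V) : Prop :=
  FiniteDimensional ℂ
    ↥(Submodule.span ℂ {I : W1.carrier → ℂ → W2.carrier → W3.carrier |
        IsIntertwiner W1 W2 W3 I})

end

/-
On functionals the adjoint mode `v*ₙ` is the transpose of an operator on `W`, for `v` of weight `p`
`(-1)ᵖ ∑ᵢ (L(1)ⁱv / i!)_{2p-n-i-2}`, so both claims are identities between operators on `W`.

For the commutator, `(ad L(1))ʳ/r! (uᵢ) = ∑_{a+c=r} C(2p-i-2-a, c) (L(1)ᵃu / a!)_{i+c}` gives an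
expansion of `e^{xL(1)} uᵢ v`. On the other side the commutator formula on `W` expands each bracket
of modes of `L(1)ᵃu / a!` and `L(1)ᵇv / b!`, with binomial coefficients in a shifted upper index.
The two agree by the Chu–Vandermonde identity `∑_{i+c=j} (-1)ⁱ C(m, i) C(s-i, c) = C(s-m, j)`.

For the derivative, `L(1)ᵏ⁺¹/(k+1)!` is moved past `L(-1)` by the `sl₂`-relations, and in the
resulting sum the coefficients of each mode combine by the `L(-1)`-derivative property on `W`.
-/

noncomputable section

open Finset

theorem sum_range_sum_antidiagonal {M : Type*} [AddCommMonoid M] {f : ℕ → ℕ → M} {K : ℕ}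
    (hf : ∀ a b, K ≤ a + b → f a b = 0) :
    ∑ k ∈ range K, ∑ p ∈ antidiagonal k, f p.1 p.2 = ∑ a ∈ range K, ∑ b ∈ range K, f a b := by
  simp_rw [Nat.sum_antidiagonal_eq_sum_range_succ f]
  rw [sum_range_diag_flip]
  refine sum_congr rfl fun a _ ↦ sum_subset (range_subset_range.mpr (Nat.sub_le K a)) ?_
  intro b _ hb
  exact hf a b (by rw [mem_range] at hb; omega)

theorem choose_eq_neg_one_pow_mul_choose {R : Type*} [CommRing R] [BinomialRing R] (r : R)
    (k : ℕ) : Ring.choose r k = (-1) ^ k * Ring.choose (k - 1 - r) k := by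
  have h := Ring.choose_neg (-r) k
  rw [neg_neg, Int.negOnePow_def, zpow_natCast, Units.smul_def, zsmul_eq_mul] at h
  rw [h, show -r + (k : R) - 1 = k - 1 - r by ring]
  push_cast
  rfl

theorem sum_antidiagonal_neg_one_pow_mul_choose_mul_choose {R : Type*} [CommRing R]
    [BinomialRing R] (r s : R) (k : ℕ) :
    ∑ p ∈ antidiagonal k, (-1) ^ p.1 * Ring.choose r p.1 * Ring.choose (s - p.1) p.2
      = Ring.choose (s - r) k := by
  -- negating the upper indices of `C(s - r, k)` and `C(s - p.1, p.2)` leaves Chu–Vandermonde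
  rw [choose_eq_neg_one_pow_mul_choose (s - r),
    show (k : R) - 1 - (s - r) = r + (k - 1 - s) by ring,
    Ring.add_choose_eq k (Commute.all _ _), mul_sum]
  refine sum_congr rfl fun p hp ↦ ?_
  obtain rfl := mem_antidiagonal.mp hp
  rw [choose_eq_neg_one_pow_mul_choose (s - p.1),
    show (p.2 : R) - 1 - (s - p.1) = ((p.1 + p.2 : ℕ) : R) - 1 - s by push_cast; ring, pow_add]
  ring

theorem succ_mul_choose_succ {R : Type*} [CommRing R] [BinomialRing R] (r : R) (k : ℕ) :
    ((k : R) + 1) * Ring.choose r (k + 1) = (r - k) * Ring.choose r k := by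
  have h := Ring.choose_smul_choose r (Nat.le_succ k)
  simp only [Nat.choose_succ_self_right, Nat.succ_eq_add_one, Nat.add_sub_cancel_left,
    Ring.choose_one_right, nsmul_eq_mul] at h
  push_cast at h
  rw [h, mul_comm]

section DividedPower

variable (𝕜 : Type*) [Field 𝕜] {A : Type*} [Ring A] [Algebra 𝕜 A]

/-- The divided power `x ^ k / k!` in an algebra over a field. -/
def dividedPower (x : A) (k : ℕ) : A := (k.factorial : 𝕜)⁻¹ • x ^ k

theorem dividedPower_zero (x : A) : dividedPower 𝕜 x 0 = 1 := by simp [dividedPower]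

variable [CharZero 𝕜]

theorem smul_dividedPower_succ (x : A) (k : ℕ) :
    ((k : 𝕜) + 1) • dividedPower 𝕜 x (k + 1) = x * dividedPower 𝕜 x k := by
  have hk : (k : 𝕜) + 1 ≠ 0 := k.cast_add_one_ne_zero
  rw [dividedPower, dividedPower, smul_smul, mul_smul_comm, ← pow_succ', Nat.factorial_succ]
  congr 1
  push_cast
  field_simp

variable {𝕜}

theorem dividedPower_add_of_commute {x y : A} (h : Commute x y) (k : ℕ) :
    dividedPower 𝕜 (x + y) k
      = ∑ p ∈ antidiagonal k, dividedPower 𝕜 x p.1 * dividedPower 𝕜 y p.2 := by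
  rw [dividedPower, h.add_pow', smul_sum]
  refine sum_congr rfl fun p hp ↦ ?_
  obtain rfl := mem_antidiagonal.mp hp
  have hne : ((p.1 + p.2).factorial : 𝕜) ≠ 0 := Nat.cast_ne_zero.mpr (Nat.factorial_ne_zero _)
  rw [dividedPower, dividedPower, smul_mul_smul_comm, ← Nat.cast_smul_eq_nsmul 𝕜, smul_smul,
    Nat.cast_add_choose, inv_mul_eq_div, div_div_cancel_left' hne, mul_inv]

attribute [local instance] LieRing.ofAssociativeRing

theorem dividedPower_mul (x y : A) (k : ℕ) :
    dividedPower 𝕜 x k * y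
      = ∑ p ∈ antidiagonal k,
          dividedPower 𝕜 (LieAlgebra.ad 𝕜 A x) p.1 y * dividedPower 𝕜 x p.2 := by
  have hsum : LinearMap.mulLeft 𝕜 x = LieAlgebra.ad 𝕜 A x + LinearMap.mulRight 𝕜 x := by
    ext; simp [LieRing.of_associative_ring_bracket]
  have hcomm : Commute (LieAlgebra.ad 𝕜 A x) (LinearMap.mulRight 𝕜 x) := by
    rw [eq_sub_of_add_eq hsum.symm]
    exact (LinearMap.commute_mulLeft_right x x).sub_left (Commute.refl _)
  have h := LinearMap.congr_fun (dividedPower_add_of_commute (𝕜 := 𝕜) hcomm.symm k) y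
  rw [add_comm, ← hsum, ← Nat.sum_antidiagonal_swap] at h
  simpa [dividedPower, LinearMap.pow_mulLeft, LinearMap.pow_mulRight, smul_smul, mul_comm] using h

theorem dividedPower_apply_eq_sum_choose_smul {M : Type*} [AddCommGroup M] [Module 𝕜 M]
    (T : Module.End 𝕜 M) (e : ℕ → ℕ → M) (s : 𝕜)
    (hT : ∀ a c : ℕ, T (e a c) = (s - 2 * a - c) • e a (c + 1) + ((a : 𝕜) + 1) • e (a + 1) c)
    (r : ℕ) :
    dividedPower 𝕜 T r (e 0 0) = ∑ p ∈ antidiagonal r, Ring.choose (s - p.1) p.2 • e p.1 p.2 := by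
  induction r with
  | zero => simp [dividedPower_zero]
  | succ r ih =>
    -- the part of `(a + c) * C(s - a, c)` that reaches `e a c` from `e a (c - 1)`; the remaining
    -- `a * C(s - a + 1, c)` comes from `e (a - 1) c`
    let h (p : ℕ × ℕ) : 𝕜 :=
      (p.1 + p.2) * Ring.choose (s - p.1) p.2 - p.1 * Ring.choose (s - p.1 + 1) p.2
    have h_succ (p : ℕ × ℕ) :
        h (p.1, p.2 + 1) = (s - 2 * p.1 - p.2) * Ring.choose (s - p.1) p.2 := by
      have := succ_mul_choose_succ (s - p.1) p.2
      simp only [h, Ring.choose_succ_succ]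
      push_cast
      linear_combination this
    refine smul_right_injective M (Nat.cast_add_one_ne_zero r : (r : 𝕜) + 1 ≠ 0) ?_
    calc ((r : 𝕜) + 1) • dividedPower 𝕜 T (r + 1) (e 0 0)
        = ∑ p ∈ antidiagonal r, (h (p.1, p.2 + 1) • e p.1 (p.2 + 1)
            + (((p.1 : 𝕜) + 1) * Ring.choose (s - p.1) p.2) • e (p.1 + 1) p.2) := by
          rw [← LinearMap.smul_apply, smul_dividedPower_succ, Module.End.mul_apply, ih, map_sum]
          refine sum_congr rfl fun p _ ↦ ?_
          rw [map_smul, hT, h_succ]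
          module
      _ = ∑ p ∈ antidiagonal (r + 1), (h p • e p.1 p.2
            + (p.1 * Ring.choose (s - p.1 + 1) p.2) • e p.1 p.2) := by
          rw [sum_add_distrib, sum_add_distrib, Nat.sum_antidiagonal_succ',
            Nat.sum_antidiagonal_succ (f := fun p ↦ ((p.1 : 𝕜) * _) • _)]
          simp [h, sub_add_eq_sub_sub]
      _ = ((r : 𝕜) + 1) • ∑ p ∈ antidiagonal (r + 1), Ring.choose (s - p.1) p.2 • e p.1 p.2 := by
          rw [smul_sum]
          refine sum_congr rfl fun p hp ↦ ?_
          have hr : (p.1 : 𝕜) + p.2 = r + 1 := mod_cast mem_antidiagonal.mp hp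
          rw [← hr]
          module

end DividedPower

theorem cchoose_eq_choose (m : ℤ) (i : ℕ) : cchoose m i = Ring.choose (m : ℂ) i := by
  rw [Ring.choose_eq_smul, cchoose, ← Polynomial.aeval_eq_smeval,
    ← descPochhammer_eval_eq_prod_range, smul_eq_mul, div_eq_inv_mul,
    ← descPochhammer_map (algebraMap ℤ ℂ), Polynomial.eval_map_algebraMap]

theorem finsum_eq_sum_range {M : Type*} [AddCommMonoid M] {f : ℕ → M} {K : ℕ}
    (hf : ∀ k, K ≤ k → f k = 0) : ∑ᶠ k, f k = ∑ k ∈ range K, f k := by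
  refine finsum_eq_sum_of_support_subset _ fun k hk ↦ ?_
  rw [coe_range, Set.mem_Iio]
  exact lt_of_not_ge fun h ↦ hk (hf k h)

theorem finite_support_of_le {M : Type*} [Zero M] {f : ℕ → M} {K : ℕ}
    (hf : ∀ k, K ≤ k → f k = 0) : (Function.support f).Finite := by
  refine (Set.finite_Iio K).subset fun k hk ↦ ?_
  exact lt_of_not_ge fun h ↦ hk (hf k h)

@[simp] theorem cchoose_zero_right (m : ℤ) : cchoose m 0 = 1 := by simp [cchoose]

@[simp] theorem cchoose_zero_succ (i : ℕ) : cchoose 0 (i + 1) = 0 := by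
  rw [cchoose_eq_choose, Int.cast_zero, Ring.choose_zero_succ]

theorem neg_one_pow_mul_cchoose_neg_two (i : ℕ) : (-1) ^ i * cchoose (-2) i = (i : ℂ) + 1 := by
  rw [cchoose_eq_choose, choose_eq_neg_one_pow_mul_choose, ← mul_assoc, ← mul_pow,
    show (i : ℂ) - 1 - ((-2 : ℤ) : ℂ) = ((i + 1 : ℕ) : ℂ) by push_cast; ring,
    Ring.choose_natCast, Nat.choose_succ_self_right]
  simp

namespace WeakModule

variable {V : VOA} (W : WeakModule V)

/-- The mode `uₙ` as an operator on `W`, depending linearly on `u`. -/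
def mode (n : ℤ) : V.carrier →ₗ[ℂ] Module.End ℂ W.carrier :=
  LinearMap.mk₂ ℂ (fun u w ↦ W.op u n w)
    (fun u u' w ↦ (W.op_linear_left n w).map_add u u')
    (fun c u w ↦ (W.op_linear_left n w).map_smul c u)
    (fun u ↦ (W.op_linear_right u n).map_add)
    (fun c u ↦ (W.op_linear_right u n).map_smul c)

theorem mode_apply (n : ℤ) (u : V.carrier) (w : W.carrier) : W.mode n u w = W.op u n w := rfl

end WeakModule

namespace VOA

variable (V : VOA)

/-- `V` as a module over itself. -/
def self : WeakModule V where
  carrier := V.carrier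
  op := V.op
  op_linear_left := V.op_linear_left
  op_linear_right := V.op_linear_right
  trunc := V.trunc
  one_op := V.one_op
  borcherds := V.borcherds

/-- The mode `uₙ` as an operator on `V`, depending linearly on `u`. -/
def mode (n : ℤ) : V.carrier →ₗ[ℂ] Module.End ℂ V.carrier := V.self.mode n

theorem mode_apply (n : ℤ) (u v : V.carrier) : V.mode n u v = V.op u n v := rfl

theorem finite_support_mode (u v : V.carrier) :
    (Function.support fun j : ℕ ↦ V.mode j u v).Finite := by
  obtain ⟨N, hN⟩ := V.trunc u v
  exact finite_support_of_le (K := N.toNat) fun j hj ↦ hN j (Int.toNat_le.mp hj)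

end VOA

namespace WeakModule

variable {V : VOA} (W : WeakModule V)

theorem finite_support_smul_mode_mode (c : ℕ → ℂ) (k : ℕ → ℤ) (u v : V.carrier) :
    (Function.support fun j : ℕ ↦ c j • W.mode (k j) (V.mode j u v)).Finite :=
  (V.finite_support_mode u v).subset fun j hj hj' ↦ hj (by simp [hj'])

theorem lie_mode_mode (u v : V.carrier) (m n : ℤ) :
    ⁅W.mode m u, W.mode n v⁆
      = ∑ᶠ j : ℕ, cchoose m j • W.mode (m + n - j) (V.mode j u v) := by
  ext w
  have h_zero (i : ℕ) (hi : i ≠ 0) : cchoose 0 i = 0 := by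
    obtain ⟨i, rfl⟩ := Nat.exists_eq_succ_of_ne_zero hi
    exact cchoose_zero_succ i
  calc ⁅W.mode m u, W.mode n v⁆ w
      = ∑ᶠ i : ℕ, ((-1 : ℂ) ^ i * cchoose 0 i) • (W.op u (0 + m - i) (W.op v (n + i) w)
          - ((-1 : ℂ) ^ (0 : ℤ)) • W.op v (0 + n - i) (W.op u (m + i) w)) := by
        rw [finsum_eq_single _ 0 fun i hi ↦ by simp [h_zero i hi]]
        simp [Ring.lie_def, mode_apply]
    _ = ∑ᶠ j : ℕ, cchoose m j • W.op (V.op u (0 + j) v) (m + n - j) w :=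
        (W.borcherds u v w 0 m n).symm
    _ = (∑ᶠ j : ℕ, cchoose m j • W.mode (m + n - j) (V.mode j u v)) w := by
        have h := (LinearMap.applyₗ (R := ℂ) w).toAddMonoidHom.map_finsum
          (W.finite_support_smul_mode_mode (cchoose m) (m + n - ·) u v)
        simpa [mode_apply, VOA.mode_apply] using h.symm

-- As `L(-1)v = v₋₂𝟏`, this is the Borcherds identity for `v` and the vacuum at `(l, m) = (-2, 0)`.
theorem mode_omega_zero (v : V.carrier) (n : ℤ) :
    W.mode n (V.mode 0 V.omega v) = (-(n : ℂ)) • W.mode (n - 1) v := by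
  ext w
  have h_vacuum : V.op V.omega 0 v = V.op v (-2) V.one := by
    have h := V.L_neg_one v (-1) V.one
    norm_num [V.create] at h
    exact h
  calc W.op (V.op V.omega 0 v) n w
      = ∑ᶠ i : ℕ, cchoose 0 i • W.op (V.op v (-2 + i) V.one) (0 + n - i) w := by
        rw [finsum_eq_single _ 0, h_vacuum]
        · simp
        · rintro (_ | i) hi
          · contradiction
          · simp
    _ = ∑ᶠ i : ℕ, ((-1 : ℂ) ^ i * cchoose (-2) i) • (W.op v (-2 + 0 - i) (W.op V.one (n + i) w)
          - ((-1 : ℂ) ^ (-2 : ℤ)) • W.op V.one (-2 + n - i) (W.op v (0 + i) w)) :=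
        W.borcherds v V.one w (-2) 0 n
    _ = ∑ᶠ i : ℕ, if i + 1 = n.natAbs then (-(n : ℂ)) • W.op v (n - 1) w else 0 := by
        refine finsum_congr fun i ↦ ?_
        rw [neg_one_pow_mul_cchoose_neg_two, W.one_op, W.one_op]
        have h_zero : W.op v (-2 + 0 - i) 0 = 0 := (W.op_linear_right v _).map_zero
        rcases eq_or_ne n (-1 - i) with rfl | h_neg
        · rw [if_pos (by ring), if_neg (by omega), if_pos (by omega),
            show (-2 + 0 - i : ℤ) = -1 - i - 1 by ring]
          push_cast
          module
        rcases eq_or_ne n (i + 1) with rfl | h_pos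
        · rw [if_neg (by omega), if_pos (by ring), if_pos (by omega), h_zero,
            show (0 + i : ℤ) = i + 1 - 1 by ring]
          norm_num [← neg_smul]
        · rw [if_neg (by omega), if_neg (by omega), if_neg (by omega), h_zero]
          simp
    _ = (-(n : ℂ)) • W.op v (n - 1) w := by
        rw [finsum_eq_single _ (n.natAbs - 1)]
        · split_ifs with h
          · rfl
          · have : n = 0 := by omega
            simp [this]
        · intro i hi
          rw [if_neg (by omega)]

end WeakModule

section Lie

attribute [local instance] LieRing.ofAssociativeRing

namespace VOA

variable (V : VOA)

theorem induction_on_homogeneous {P : V.carrier → Prop}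
    (homogeneous : ∀ (p : ℤ), ∀ v ∈ V.wtSpace p, P v) (add : ∀ v v', P v → P v' → P (v + v'))
    (v : V.carrier) : P v := by
  rw [← V.proj_sum v]
  exact finsum_induction P (homogeneous 0 0 (Submodule.zero_mem _)) add
    fun p ↦ homogeneous p _ (V.proj_mem p v)

/-- The Virasoro operator `L(1)` as a linear map. -/
def L1 : Module.End ℂ V.carrier := V.mode 2 V.omega

/-- The coefficient `L(1)ᵏ / k!` of `xᵏ` in `e^{xL(1)}`. -/
def expL1 (k : ℕ) : Module.End ℂ V.carrier := dividedPower ℂ V.L1 k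

/-- The coefficient `(ad L(1))ᵏ / k!` of `xᵏ` in conjugation by `e^{xL(1)}`. -/
def adExpL1 (k : ℕ) : Module.End ℂ (Module.End ℂ V.carrier) :=
  dividedPower ℂ (LieAlgebra.ad ℂ (Module.End ℂ V.carrier) V.L1) k

/-- A lower bound for the weights of `V`. -/
def wtBound : ℤ := V.lower_trunc.choose

variable {V}

theorem eq_zero_of_lt_wtBound {p : ℤ} (hp : p < V.wtBound) {v : V.carrier}
    (hv : v ∈ V.wtSpace p) : v = 0 := by
  rwa [V.lower_trunc.choose_spec p hp, Submodule.mem_bot] at hv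

theorem mode_mem_wtSpace {p q : ℤ} {u v : V.carrier} (hu : u ∈ V.wtSpace p)
    (hv : v ∈ V.wtSpace q) (i : ℤ) : V.mode i u v ∈ V.wtSpace (p + q - i - 1) :=
  V.op_wt p q i u hu v hv

@[simp] theorem expL1_zero : V.expL1 0 = 1 := dividedPower_zero ℂ _

theorem L1_expL1 (k : ℕ) (v : V.carrier) :
    V.L1 (V.expL1 k v) = ((k : ℂ) + 1) • V.expL1 (k + 1) v :=
  (LinearMap.congr_fun (smul_dividedPower_succ ℂ V.L1 k) v).symm

theorem expL1_mem_wtSpace {p : ℤ} {v : V.carrier} (hv : v ∈ V.wtSpace p) (k : ℕ) :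
    V.expL1 k v ∈ V.wtSpace (p - k) := by
  induction k with
  | zero => simpa using hv
  | succ k ih =>
    rw [← Submodule.smul_mem_iff _ (Nat.cast_add_one_ne_zero k : (k : ℂ) + 1 ≠ 0), ← L1_expL1]
    have h := mode_mem_wtSpace V.omega_wt ih 2
    rwa [show 2 + (p - k) - 2 - 1 = p - (k + 1 : ℕ) by push_cast; ring] at h

theorem expL1_eq_zero {p : ℤ} {v : V.carrier} (hv : v ∈ V.wtSpace p) {k : ℕ}
    (hk : p - k < V.wtBound) : V.expL1 k v = 0 :=
  eq_zero_of_lt_wtBound hk (expL1_mem_wtSpace hv k)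

theorem finite_support_expL1 {p : ℤ} {v : V.carrier} (hv : v ∈ V.wtSpace p) :
    (Function.support fun k ↦ V.expL1 k v).Finite :=
  finite_support_of_le (K := (p - V.wtBound + 1).toNat) fun _ hk ↦
    expL1_eq_zero hv (by omega)

theorem lie_L1_mode {p : ℤ} {u : V.carrier} (hu : u ∈ V.wtSpace p) (i : ℤ) :
    ⁅V.L1, V.mode i u⁆
      = (2 * (p : ℂ) - i - 2) • V.mode (i + 1) u + V.mode i (V.L1 u) := by
  have h_choose (j : ℕ) : cchoose 2 j = (Nat.choose 2 j : ℂ) := by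
    rw [cchoose_eq_choose]
    exact mod_cast Ring.choose_natCast (R := ℂ) 2 j
  have h0 : V.mode (2 + i) (V.mode 0 V.omega u) = (-(i : ℂ) - 2) • V.mode (i + 1) u := by
    have h := V.self.mode_omega_zero u (2 + i)
    rw [show 2 + i - 1 = i + 1 by ring] at h
    refine h.trans ?_
    push_cast
    congr 1
    ring
  have h1 : V.mode 1 V.omega u = (p : ℂ) • u := V.L_zero p u hu
  calc ⁅V.L1, V.mode i u⁆
      = ∑ j ∈ range 3, cchoose 2 j • V.mode (2 + i - j) (V.mode j V.omega u) := by
        refine (V.self.lie_mode_mode V.omega u 2 i).trans (finsum_eq_sum_range fun j hj ↦ ?_)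
        rw [h_choose, Nat.choose_eq_zero_of_lt hj, Nat.cast_zero, zero_smul]
    _ = (2 * (p : ℂ) - i - 2) • V.mode (i + 1) u + V.mode i (V.L1 u) := by
        simp only [sum_range_succ, sum_range_zero, h_choose, Nat.choose_zero_right,
          Nat.choose_one_right, Nat.choose_self, Nat.cast_zero, Nat.cast_one, Nat.cast_ofNat,
          sub_zero, show 2 + i - 1 = i + 1 by ring, add_sub_cancel_left, h0, h1, map_smul, L1]
        module

theorem adExpL1_mode {p : ℤ} {u : V.carrier} (hu : u ∈ V.wtSpace p) (i : ℤ) (r : ℕ) :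
    V.adExpL1 r (V.mode i u)
      = ∑ a ∈ antidiagonal r,
          Ring.choose (2 * (p : ℂ) - i - 2 - a.1) a.2 • V.mode (i + a.2) (V.expL1 a.1 u) := by
  have h := dividedPower_apply_eq_sum_choose_smul
    (LieAlgebra.ad ℂ (Module.End ℂ V.carrier) V.L1)
    (fun a c ↦ V.mode (i + c) (V.expL1 a u)) (2 * (p : ℂ) - i - 2) (fun a c ↦ ?_) r
  · simpa [adExpL1] using h
  · rw [LieAlgebra.ad_apply, lie_L1_mode (expL1_mem_wtSpace hu a), L1_expL1, map_smul]
    push_cast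
    rw [add_assoc]
    congr 2
    ring

theorem expL1_mode (i : ℤ) (u v : V.carrier) (k : ℕ) :
    V.expL1 k (V.mode i u v)
      = ∑ p ∈ antidiagonal k, V.adExpL1 p.1 (V.mode i u) (V.expL1 p.2 v) := by
  simpa [expL1, adExpL1] using LinearMap.congr_fun (dividedPower_mul V.L1 (V.mode i u) k) v

theorem expL1_succ_mode_omega_zero {p : ℤ} {v : V.carrier} (hv : v ∈ V.wtSpace p) (k : ℕ) :
    V.expL1 (k + 1) (V.mode 0 V.omega v)
      = V.mode 0 V.omega (V.expL1 (k + 1) v) + (2 * (p : ℂ) - k) • V.expL1 k v := by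
  have h_comm {q : ℤ} {x : V.carrier} (hx : x ∈ V.wtSpace q) :
      V.L1 (V.mode 0 V.omega x) = V.mode 0 V.omega (V.L1 x) + (2 * (q : ℂ)) • x := by
    have h := V.virasoro 1 (-1) x
    norm_num [V.L_zero q x hx, smul_smul] at h
    exact sub_eq_iff_eq_add'.mp h
  induction k with
  | zero =>
    have h_one : V.expL1 1 = V.L1 := by simp [expL1, dividedPower]
    simp [h_one, h_comm hv]
  | succ k ih =>
    have hk : ((k + 1 : ℕ) : ℂ) + 1 ≠ 0 := Nat.cast_add_one_ne_zero (k + 1)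
    refine smul_right_injective _ hk ?_
    dsimp only
    rw [smul_add, ← L1_expL1, ← map_smul (V.mode 0 V.omega), ← L1_expL1, ih, map_add, map_smul,
      h_comm (expL1_mem_wtSpace hv _), L1_expL1 k]
    push_cast
    module

end VOA

namespace WeakModule

variable {V : VOA} (W : WeakModule V)

theorem lie_mode_mode_eq_sum {u v : V.carrier} {K : ℕ} (hK : ∀ j : ℕ, K ≤ j → V.mode j u v = 0)
    (m n : ℤ) :
    ⁅W.mode m u, W.mode n v⁆
      = ∑ j ∈ range K, cchoose m j • W.mode (m + n - j) (V.mode j u v) := by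
  rw [lie_mode_mode]
  exact finsum_eq_sum_range fun j hj ↦ by rw [hK j hj, map_zero, smul_zero]

theorem sum_lie_mode_expL1_mode {p : ℤ} {u : V.carrier} (hu : u ∈ V.wtSpace p) (y : V.carrier)
    {K : ℕ} (hK : ∀ a j : ℕ, K ≤ a + j → V.mode j (V.expL1 a u) y = 0) (m s : ℤ) :
    ∑ a ∈ range K, ⁅W.mode (2 * p - m - a - 2) (V.expL1 a u), W.mode s y⁆
      = ∑ i ∈ range K, ((-1) ^ i * cchoose m i) •
          ∑ r ∈ range K, W.mode (2 * p - m - i - r - 2 + s) (V.adExpL1 r (V.mode i u) y) := by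
  let F (i c a : ℕ) : Module.End ℂ W.carrier :=
    ((-1) ^ i * Ring.choose (m : ℂ) i * Ring.choose (2 * (p : ℂ) - a - 2 - i) c) •
      W.mode (2 * p - m - a - (i + c : ℕ) - 2 + s) (V.mode (i + c : ℕ) (V.expL1 a u) y)
  have hF {i c a : ℕ} (h : K ≤ a + (i + c)) : F i c a = 0 := by
    simp only [F, hK a (i + c) h, map_zero, smul_zero]
  have h_left (a : ℕ) : ⁅W.mode (2 * p - m - a - 2) (V.expL1 a u), W.mode s y⁆
      = ∑ i ∈ range K, ∑ c ∈ range K, F i c a := by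
    rw [W.lie_mode_mode_eq_sum fun j hj ↦ hK a j (hj.trans (Nat.le_add_left j a)),
      ← sum_range_sum_antidiagonal fun i c h ↦ hF (h.trans (Nat.le_add_left _ a))]
    refine sum_congr rfl fun j _ ↦ ?_
    have h_choose : cchoose (2 * p - m - a - 2) j = Ring.choose (2 * (p : ℂ) - a - 2 - m) j := by
      rw [cchoose_eq_choose]
      congr 1
      push_cast
      ring
    rw [h_choose, ← sum_antidiagonal_neg_one_pow_mul_choose_mul_choose, sum_smul]
    refine sum_congr rfl fun x hx ↦ ?_
    obtain rfl := mem_antidiagonal.mp hx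
    dsimp only [F]
    congr 3
    ring
  have h_right (i : ℕ) : ((-1) ^ i * cchoose m i) •
        ∑ r ∈ range K, W.mode (2 * p - m - i - r - 2 + s) (V.adExpL1 r (V.mode i u) y)
      = ∑ a ∈ range K, ∑ c ∈ range K, F i c a := by
    rw [← sum_range_sum_antidiagonal (f := fun a c ↦ F i c a) fun a c h ↦ hF (by omega), smul_sum]
    refine sum_congr rfl fun r _ ↦ ?_
    rw [VOA.adExpL1_mode hu, LinearMap.sum_apply, map_sum, smul_sum]
    refine sum_congr rfl fun x hx ↦ ?_
    obtain rfl := mem_antidiagonal.mp hx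
    have h_top : 2 * (p : ℂ) - (i : ℤ) - 2 - x.1 = 2 * (p : ℂ) - x.1 - 2 - i := by push_cast; ring
    have h_index : 2 * p - m - i - (x.1 + x.2 : ℕ) - 2 + s
        = 2 * p - m - x.1 - (i + x.2 : ℕ) - 2 + s := by push_cast; ring
    rw [LinearMap.smul_apply, map_smul, smul_smul, cchoose_eq_choose, h_top, h_index,
      ← Nat.cast_add i x.2]
  simp_rw [h_left, h_right]
  exact sum_comm

end WeakModule

namespace VOA

variable {V : VOA}

theorem adExpL1_mode_apply_eq_zero {p q i : ℤ} {u v : V.carrier} {r : ℕ} (hu : u ∈ V.wtSpace p)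
    (hv : v ∈ V.wtSpace q) (h : p + q - i - r - 1 < V.wtBound) :
    V.adExpL1 r (V.mode i u) v = 0 := by
  rw [adExpL1_mode hu, LinearMap.sum_apply]
  refine sum_eq_zero fun a ha ↦ ?_
  obtain rfl := mem_antidiagonal.mp ha
  rw [LinearMap.smul_apply, eq_zero_of_lt_wtBound (by push_cast at h; omega)
    (mode_mem_wtSpace (expL1_mem_wtSpace hu a.1) hv (i + a.2)), smul_zero]

end VOA

namespace WeakModule

variable {V : VOA} (W : WeakModule V)

theorem sum_sum_mode_adExpL1_mode {p q i : ℤ} {u v : V.carrier} {K : ℕ} (hu : u ∈ V.wtSpace p)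
    (hv : v ∈ V.wtSpace q) (hK : p + q - i - K - 1 < V.wtBound) (t : ℤ) :
    ∑ r ∈ range K, ∑ b ∈ range K,
        W.mode (t - r - b) (V.adExpL1 r (V.mode i u) (V.expL1 b v))
      = ∑ k ∈ range K, W.mode (t - k) (V.expL1 k (V.mode i u v)) := by
  rw [← sum_range_sum_antidiagonal]
  · refine sum_congr rfl fun k _ ↦ ?_
    rw [VOA.expL1_mode, map_sum]
    refine sum_congr rfl fun x hx ↦ ?_
    obtain rfl := mem_antidiagonal.mp hx
    rw [Nat.cast_add, sub_add_eq_sub_sub]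
  · intro r b h
    rw [VOA.adExpL1_mode_apply_eq_zero hu (VOA.expL1_mem_wtSpace hv b) (by omega), map_zero]

theorem sum_sum_lie_mode_expL1 {p q : ℤ} {u v : V.carrier} {K : ℕ} (hu : u ∈ V.wtSpace p)
    (hv : v ∈ V.wtSpace q) (hK : p + q - K - 1 < V.wtBound) (m n : ℤ) :
    ∑ b ∈ range K, ∑ a ∈ range K,
        ⁅W.mode (2 * p - m - a - 2) (V.expL1 a u), W.mode (2 * q - n - b - 2) (V.expL1 b v)⁆
      = ∑ i ∈ range K, ((-1) ^ i * cchoose m i) • ∑ k ∈ range K,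
          W.mode (2 * (p + q - i - 1) - (m + n - i) - k - 2) (V.expL1 k (V.mode i u v)) := by
  have h_zero (b a j : ℕ) (h : K ≤ a + j) : V.mode j (V.expL1 a u) (V.expL1 b v) = 0 :=
    VOA.eq_zero_of_lt_wtBound (by omega)
      (VOA.mode_mem_wtSpace (VOA.expL1_mem_wtSpace hu a) (VOA.expL1_mem_wtSpace hv b) j)
  simp_rw [W.sum_lie_mode_expL1_mode hu _ (h_zero _)]
  rw [sum_comm]
  refine sum_congr rfl fun i _ ↦ ?_
  rw [← smul_sum, sum_comm]
  congr 1
  have h := W.sum_sum_mode_adExpL1_mode hu hv (i := i) (K := K) (by omega)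
    (2 * (p + q - i - 1) - (m + n - i) - 2)
  simp only [sub_right_comm _ _ (2 : ℤ)] at h ⊢
  refine Eq.trans ?_ h
  refine sum_congr rfl fun r _ ↦ sum_congr rfl fun b _ ↦ ?_
  congr 2
  ring

/-- The adjoint mode `v*ₙ` for `v` of weight `p`, as an operator on `W`; the sum over `i` stops
where weights fall below `wtBound`, so that it is a linear map on all of `V`. -/
def homAdjointMode (p n : ℤ) : V.carrier →ₗ[ℂ] Module.End ℂ W.carrier :=
  (-1 : ℂ) ^ p • ∑ i ∈ range (p - V.wtBound + 1).toNat, W.mode (2 * p - n - i - 2) ∘ₗ V.expL1 i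

theorem finsum_mode_expL1_eq_sum {p : ℤ} {v : V.carrier} {K : ℕ} (hv : v ∈ V.wtSpace p)
    (hK : p - K < V.wtBound) (t : ℕ → ℤ) :
    ∑ᶠ i : ℕ, W.mode (t i) (V.expL1 i v) = ∑ i ∈ range K, W.mode (t i) (V.expL1 i v) :=
  finsum_eq_sum_range fun i hi ↦ by rw [VOA.expL1_eq_zero hv (by omega), map_zero]

theorem finite_support_mode_expL1 {p : ℤ} {v : V.carrier} (hv : v ∈ V.wtSpace p) (t : ℕ → ℤ) :
    (Function.support fun i ↦ W.mode (t i) (V.expL1 i v)).Finite :=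
  (VOA.finite_support_expL1 hv).subset fun i hi hi' ↦ hi (by simp [hi'])

theorem homAdjointMode_eq_finsum {p : ℤ} {v : V.carrier} (hv : v ∈ V.wtSpace p) (n : ℤ) :
    W.homAdjointMode p n v
      = (-1 : ℂ) ^ p • ∑ᶠ i : ℕ, W.mode (2 * p - n - i - 2) (V.expL1 i v) := by
  rw [W.finsum_mode_expL1_eq_sum hv (K := (p - V.wtBound + 1).toNat) (by omega)]
  simp [homAdjointMode]

theorem finite_support_homAdjointMode_proj (n : ℤ) (v : V.carrier) :
    (Function.support fun p ↦ W.homAdjointMode p n (V.proj p v)).Finite :=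
  (V.proj_finite v).subset fun p hp hp' ↦ hp (by simp [hp'])

/-- The operator on `W` whose transpose is the adjoint mode `v*ₙ`, depending linearly on `v`. -/
def adjointMode (n : ℤ) : V.carrier →ₗ[ℂ] Module.End ℂ W.carrier where
  toFun v := ∑ᶠ p : ℤ, W.homAdjointMode p n (V.proj p v)
  map_add' v v' := by
    simp only [(V.proj_linear _).map_add, map_add]
    exact finsum_add_distrib (W.finite_support_homAdjointMode_proj n v)
      (W.finite_support_homAdjointMode_proj n v')
  map_smul' c v := by
    simp only [(V.proj_linear _).map_smul, map_smul, smul_finsum, RingHom.id_apply]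

theorem adjointMode_eq_sum {p : ℤ} {v : V.carrier} {K : ℕ} (hv : v ∈ V.wtSpace p)
    (hK : p - K < V.wtBound) (n : ℤ) :
    W.adjointMode n v
      = (-1 : ℂ) ^ p • ∑ i ∈ range K, W.mode (2 * p - n - i - 2) (V.expL1 i v) := by
  rw [← W.finsum_mode_expL1_eq_sum hv hK, ← W.homAdjointMode_eq_finsum hv]
  refine (finsum_eq_single _ p fun p' hp' ↦ ?_).trans ?_
  · rw [V.proj_ne p p' hp'.symm v hv, map_zero]
  · rw [V.proj_eq p v hv]

theorem dmode_eq_apply_adjointMode (α : W.carrier →ₗ[ℂ] ℂ) (v : V.carrier) (n : ℤ)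
    (w : W.carrier) : W.dmode v n α w = α (W.adjointMode n v w) := by
  let eval : Module.End ℂ W.carrier →ₗ[ℂ] ℂ := α ∘ₗ LinearMap.applyₗ w
  have h_iterate (i : ℕ) (x : V.carrier) :
      (V.L 1)^[i] x = (i.factorial : ℂ) • V.expL1 i x := by
    have hi : (i.factorial : ℂ) ≠ 0 := Nat.cast_ne_zero.mpr i.factorial_ne_zero
    rw [VOA.expL1, dividedPower, LinearMap.smul_apply, smul_inv_smul₀ hi, Module.End.pow_apply]
    rfl
  calc W.dmode v n α w
      = ∑ᶠ p : ℤ, eval (W.homAdjointMode p n (V.proj p v)) := by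
        refine finsum_congr fun p ↦ ?_
        have h_map := eval.toAddMonoidHom.map_finsum
          (W.finite_support_mode_expL1 (V.proj_mem p v) fun i ↦ 2 * p - n - i - 2)
        rw [LinearMap.toAddMonoidHom_coe] at h_map
        rw [W.homAdjointMode_eq_finsum (V.proj_mem p v), map_smul, h_map, smul_finsum]
        refine finsum_congr fun i ↦ ?_
        rw [h_iterate, ← mode_apply, map_smul, LinearMap.smul_apply, map_smul, smul_eq_mul,
          smul_eq_mul, ← mul_assoc, div_mul_cancel₀ _ (Nat.cast_ne_zero.mpr i.factorial_ne_zero)]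
        rfl
    _ = α (W.adjointMode n v w) :=
        (eval.toAddMonoidHom.map_finsum (W.finite_support_homAdjointMode_proj n v)).symm

theorem dmode_dmode (α : W.carrier →ₗ[ℂ] ℂ) (u v : V.carrier) (m n : ℤ) (w : W.carrier) :
    W.dmode u m (W.dmode v n α) w = α ((W.adjointMode n v * W.adjointMode m u) w) := by
  have h : W.dmode v n α = α ∘ₗ W.adjointMode n v :=
    funext (W.dmode_eq_apply_adjointMode α v n)
  rw [h, dmode_eq_apply_adjointMode]
  rfl

theorem lie_adjointMode_of_mem {p q : ℤ} {u v : V.carrier} (hu : u ∈ V.wtSpace p)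
    (hv : v ∈ V.wtSpace q) (m n : ℤ) :
    ⁅W.adjointMode n v, W.adjointMode m u⁆
      = ∑ᶠ i : ℕ, cchoose m i • W.adjointMode (m + n - i) (V.mode i u v) := by
  obtain ⟨K, hpK, hqK, hpqK⟩ : ∃ K : ℕ,
      p - K < V.wtBound ∧ q - K < V.wtBound ∧ p + q - K - 1 < V.wtBound :=
    ⟨(max (max p q) (p + q) - V.wtBound + 1).toNat, by omega, by omega, by omega⟩
  have h_zero (i : ℕ) (hi : K ≤ i) : V.mode i u v = 0 :=
    VOA.eq_zero_of_lt_wtBound (by omega) (VOA.mode_mem_wtSpace hu hv i)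
  have h_sign (i : ℕ) : (-1 : ℂ) ^ (p + q - i - 1) = -((-1) ^ q * (-1) ^ p * (-1) ^ i) := by
    rw [zpow_sub_one₀ (by norm_num), zpow_sub₀ (by norm_num), zpow_add₀ (by norm_num),
      zpow_natCast, div_eq_mul_inv, ← inv_pow]
    norm_num
    ring
  calc ⁅W.adjointMode n v, W.adjointMode m u⁆
      = -((-1 : ℂ) ^ q * (-1) ^ p) • ∑ b ∈ range K, ∑ a ∈ range K,
          ⁅W.mode (2 * p - m - a - 2) (V.expL1 a u), W.mode (2 * q - n - b - 2) (V.expL1 b v)⁆ := by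
        rw [W.adjointMode_eq_sum hu hpK, W.adjointMode_eq_sum hv hqK, ← lie_skew, smul_lie,
          lie_smul, sum_lie, sum_comm]
        simp only [lie_sum, neg_smul, smul_smul]
        rw [mul_comm]
    _ = ∑ i ∈ range K, cchoose m i • W.adjointMode (m + n - i) (V.mode i u v) := by
        rw [W.sum_sum_lie_mode_expL1 hu hv hpqK, smul_sum]
        refine sum_congr rfl fun i _ ↦ ?_
        rw [W.adjointMode_eq_sum (VOA.mode_mem_wtSpace hu hv i) (K := K) (by omega), h_sign,
          smul_smul, smul_smul]
        congr 1
        ring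
    _ = ∑ᶠ i : ℕ, cchoose m i • W.adjointMode (m + n - i) (V.mode i u v) :=
        (finsum_eq_sum_range fun i hi ↦ by rw [h_zero i hi, map_zero, smul_zero]).symm

theorem finite_support_smul_adjointMode_mode (c : ℕ → ℂ) (k : ℕ → ℤ) (u v : V.carrier) :
    (Function.support fun i : ℕ ↦ c i • W.adjointMode (k i) (V.mode i u v)).Finite :=
  (V.finite_support_mode u v).subset fun i hi hi' ↦ hi (by simp [hi'])

theorem lie_adjointMode (u v : V.carrier) (m n : ℤ) :
    ⁅W.adjointMode n v, W.adjointMode m u⁆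
      = ∑ᶠ i : ℕ, cchoose m i • W.adjointMode (m + n - i) (V.mode i u v) := by
  have h_fin := W.finite_support_smul_adjointMode_mode (cchoose m) (m + n - ·)
  induction u using VOA.induction_on_homogeneous with
  | add u u' hu hu' =>
    simp only [map_add, lie_add, LinearMap.add_apply, smul_add, hu, hu']
    exact (finsum_add_distrib (h_fin u v) (h_fin u' v)).symm
  | homogeneous p u hu =>
    induction v using VOA.induction_on_homogeneous with
    | add v v' hv hv' =>
      simp only [map_add, add_lie, smul_add, hv, hv']
      exact (finsum_add_distrib (h_fin u v) (h_fin u v')).symm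
    | homogeneous q v hv => exact W.lie_adjointMode_of_mem hu hv m n

theorem sum_mode_expL1_mode_omega_zero {p : ℤ} {v : V.carrier} {K : ℕ} (hv : v ∈ V.wtSpace p)
    (hK : p - K < V.wtBound) (n : ℤ) :
    ∑ k ∈ range (K + 1), W.mode (2 * (p + 1) - n - k - 2) (V.expL1 k (V.mode 0 V.omega v))
      = (n : ℂ) • ∑ k ∈ range K, W.mode (2 * p - (n - 1) - k - 2) (V.expL1 k v) := by
  let g (k : ℕ) : Module.End ℂ W.carrier := W.mode (2 * p - (n - 1) - k - 2) (V.expL1 k v)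
  have h_omega (k : ℕ) : W.mode (2 * (p + 1) - n - k - 2) (V.mode 0 V.omega (V.expL1 k v))
      = (n + k - 2 * (p : ℂ)) • g k := by
    rw [mode_omega_zero, show 2 * (p + 1) - n - k - 2 - 1 = 2 * p - (n - 1) - k - 2 by ring]
    push_cast
    dsimp only [g]
    congr 1
    ring
  have h_succ (k : ℕ) :
      W.mode (2 * (p + 1) - n - (k + 1 : ℕ) - 2) (V.expL1 (k + 1) (V.mode 0 V.omega v))
        = (n + (k + 1 : ℕ) - 2 * (p : ℂ)) • g (k + 1) + (2 * (p : ℂ) - k) • g k := by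
    rw [VOA.expL1_succ_mode_omega_zero hv, map_add, h_omega, map_smul,
      show 2 * (p + 1) - n - (k + 1 : ℕ) - 2 = 2 * p - (n - 1) - k - 2 by push_cast; ring]
  have hg : g K = 0 := by simp only [g, VOA.expL1_eq_zero hv hK, map_zero]
  calc ∑ k ∈ range (K + 1), W.mode (2 * (p + 1) - n - k - 2) (V.expL1 k (V.mode 0 V.omega v))
      = ∑ k ∈ range (K + 1), (n + k - 2 * (p : ℂ)) • g k
          + ∑ k ∈ range K, (2 * (p : ℂ) - k) • g k := by
        rw [sum_range_succ', sum_congr rfl fun k _ ↦ h_succ k, sum_add_distrib,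
          sum_range_succ' (fun k ↦ (n + k - 2 * (p : ℂ)) • g k), ← h_omega 0, VOA.expL1_zero]
        exact add_right_comm _ _ _
    _ = (n : ℂ) • ∑ k ∈ range K, g k := by
        rw [sum_range_succ, hg, smul_zero, add_zero, ← sum_add_distrib, smul_sum]
        refine sum_congr rfl fun k _ ↦ ?_
        module

theorem adjointMode_omega_zero (v : V.carrier) (n : ℤ) :
    W.adjointMode n (V.mode 0 V.omega v) = (-(n : ℂ)) • W.adjointMode (n - 1) v := by
  induction v using VOA.induction_on_homogeneous with
  | add v v' hv hv' => simp only [map_add, smul_add, hv, hv']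
  | homogeneous p v hv =>
    obtain ⟨K, hK⟩ : ∃ K : ℕ, p - K < V.wtBound := ⟨(p - V.wtBound + 1).toNat, by omega⟩
    have h_mem : V.mode 0 V.omega v ∈ V.wtSpace (p + 1) := by
      have h := VOA.mode_mem_wtSpace V.omega_wt hv 0
      rwa [show 2 + p - 0 - 1 = p + 1 by ring] at h
    rw [W.adjointMode_eq_sum h_mem (K := K + 1) (by push_cast; omega), W.adjointMode_eq_sum hv hK,
      W.sum_mode_expL1_mode_omega_zero hv hK, zpow_add_one₀ (by norm_num)]
    module

end WeakModule

end Lie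

end

/-- For a VOA `V` and a weak `V`-module `W`, the adjoint vertex
operators `Y*(v,x) = Σₙ v*ₙ x^{-n-1}` on the full dual `W*` satisfy the opposite-Jacobi
commutator formula `[Y*(u,x₁), Y*(v,x₂)] = Res_{x₀} x₂⁻¹ δ((x₁-x₀)/x₂) Y*(Y(u,x₀)v, x₂)`,
i.e. in components `[u*ₘ, v*ₙ] = Σ_{i≥0} C(m,i) (uᵢv)*_{m+n-i}`, together with the
`L(-1)`-derivative property `Y*(L(-1)v, x) = (d/dx) Y*(v,x)`, i.e.
`(L(-1)v)*ₙ = -n v*_{n-1}`. -/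
theorem adjoint_operators_commutator_and_derivative (V : VOA) (W : WeakModule V) :
    (∀ α : W.carrier → ℂ, IsLinearMap ℂ α →
      ∀ (u v : V.carrier) (m n : ℤ) (w : W.carrier),
        W.dmode u m (W.dmode v n α) w - W.dmode v n (W.dmode u m α) w
          = ∑ᶠ i : ℕ, cchoose m i * W.dmode (V.op u (i : ℤ) v) (m + n - (i : ℤ)) α w) ∧
    (∀ α : W.carrier → ℂ, IsLinearMap ℂ α →
      ∀ (v : V.carrier) (n : ℤ) (w : W.carrier),
        W.dmode (V.op V.omega 0 v) n α w = (-(n : ℂ)) * W.dmode v (n - 1) α w) := by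
  constructor
  · intro α hα u v m n w
    obtain ⟨α, rfl⟩ : ∃ α' : W.carrier →ₗ[ℂ] ℂ, ⇑α' = α := ⟨hα.mk' α, rfl⟩
    rw [W.dmode_dmode, W.dmode_dmode, ← map_sub, ← LinearMap.sub_apply, ← Ring.lie_def,
      W.lie_adjointMode]
    simp only [W.dmode_eq_apply_adjointMode]
    exact ((α ∘ₗ LinearMap.applyₗ w).toAddMonoidHom.map_finsum
      (W.finite_support_smul_adjointMode_mode (cchoose m) (m + n - ·) u v)).trans
        (finsum_congr fun i ↦ α.map_smul _ _)
  · intro α hα v n w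
    obtain ⟨α, rfl⟩ : ∃ α' : W.carrier →ₗ[ℂ] ℂ, ⇑α' = α := ⟨hα.mk' α, rfl⟩
    rw [W.dmode_eq_apply_adjointMode, W.dmode_eq_apply_adjointMode, ← VOA.mode_apply,
      W.adjointMode_omega_zero, LinearMap.smul_apply, map_smul, smul_eq_mul]
end

section
/- Let V be a vertex operator algebra, W a weak V-module, and α ∈ W*. Then α ∈ D(W) if and only if for every v ∈ V there exists k ∈ ℤ such that v_m W ⊆ ker α for all m ≤ k; equivalently, if and only if for every v ∈ V there exists r ∈ ℤ such that x^r ⟨α, Y(v,x)w⟩ ∈ ℂ[x^{−1}] for all w ∈ W. -/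
/-!
Let `S` be the space of those `v` for which the degree in `x` of `⟨α, Y(v,x)w⟩` is bounded above
uniformly in `w`. For `v` of weight `h` the summand `i = 0` of `⟨v*ₙα, w⟩` is `±⟨α, v_{2h-n-2}w⟩`,
while the others involve only the vectors `L(1)ⁱv` of weight `h - i < h`, of which finitely many
are nonzero. If all of these lie in `S`, then `v*ₙα = ±α ∘ v_{2h-n-2}` for `n` large, so that
`v ∈ S` iff `v*ₙα = 0` for `n` large. This yields one implication at once, and the other by
induction on `h`, which starts because the weights of `V` are bounded below.
-/

open Filter

namespace VOA

variable (V : VOA)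

theorem iSup_wtSpace : ⨆ h, V.wtSpace h = ⊤ := by
  refine Submodule.eq_top_iff'.2 fun v => ?_
  rw [← V.proj_sum v]
  exact finsum_induction (· ∈ ⨆ h, V.wtSpace h) (zero_mem _) (fun _ _ => add_mem)
    fun h => Submodule.mem_iSup_of_mem h (V.proj_mem h v)

theorem L_map_zero (k : ℤ) : V.L k 0 = 0 :=
  (V.op_linear_right V.omega (k + 1)).map_zero

variable {V} {h : ℤ} {v : V.carrier}

theorem L_mem_wtSpace (k : ℤ) (hv : v ∈ V.wtSpace h) : V.L k v ∈ V.wtSpace (h - k) := by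
  have hLv := V.op_wt 2 h (k + 1) V.omega V.omega_wt v hv
  rwa [show 2 + h - (k + 1) - 1 = h - k by ring] at hLv

theorem iterate_L_mem_wtSpace (k : ℤ) (hv : v ∈ V.wtSpace h) (i : ℕ) :
    (V.L k)^[i] v ∈ V.wtSpace (h - i * k) := by
  induction i with
  | zero => simpa using hv
  | succ i ih =>
    rw [Function.iterate_succ_apply', show h - (i + 1 : ℕ) * k = h - i * k - k by push_cast; ring]
    exact L_mem_wtSpace k ih

theorem exists_iterate_L_eq_zero {k : ℤ} (hk : 0 < k) (hv : v ∈ V.wtSpace h) :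
    ∃ B : ℕ, ∀ i, B ≤ i → (V.L k)^[i] v = 0 := by
  obtain ⟨N, hN⟩ := V.lower_trunc
  refine ⟨(h - N + 1).toNat, fun i hi => ?_⟩
  have hlow : h - i * k < N := by nlinarith [Int.toNat_le.1 hi]
  simpa [hN _ hlow] using iterate_L_mem_wtSpace k hv i

end VOA

namespace WeakModule

variable {V : VOA} (W : WeakModule V)

theorem zero_op (m : ℤ) (w : W.carrier) : W.op 0 m w = 0 :=
  (W.op_linear_left m w).map_zero

/-- The space of all `v ∈ V` for which the degree in `x` of `⟨α, Y(v,x)w⟩ = Σₘ ⟨α, vₘw⟩ x^{-m-1}`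
is bounded above uniformly in `w ∈ W`, expressed as: `vₘW ⊆ ker α` for all sufficiently
negative `m`. -/
def boundedDegree (α : Module.Dual ℂ W.carrier) : Submodule ℂ V.carrier where
  carrier := {v | ∀ᶠ m : ℤ in atBot, ∀ w, α (W.op v m w) = 0}
  zero_mem' := Eventually.of_forall fun m w => by rw [W.zero_op, map_zero]
  add_mem' {u v} hu hv := by
    filter_upwards [hu, hv] with m hum hvm w
    rw [(W.op_linear_left m w).map_add u v, map_add, hum, hvm, add_zero]
  smul_mem' c v hv := by
    filter_upwards [hv] with m hvm w
    rw [(W.op_linear_left m w).map_smul c v, map_smul, hvm, smul_zero]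

variable {W} {α : Module.Dual ℂ W.carrier} {h : ℤ} {v : V.carrier}

theorem mem_boundedDegree_iff_exists_le :
    v ∈ W.boundedDegree α ↔ ∃ k : ℤ, ∀ m : ℤ, m ≤ k → ∀ w, α (W.op v m w) = 0 :=
  eventually_atBot

theorem mem_boundedDegree_iff_exists_pos :
    v ∈ W.boundedDegree α ↔ ∃ r : ℤ, ∀ m : ℤ, 0 < r - m - 1 → ∀ w, α (W.op v m w) = 0 := by
  rw [mem_boundedDegree_iff_exists_le]
  constructor
  · rintro ⟨k, hk⟩
    exact ⟨k, fun m hm => hk m (by lia)⟩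
  · rintro ⟨r, hr⟩
    exact ⟨r - 2, fun m hm => hr m (by lia)⟩

theorem mem_boundedDegree_iff_eventually_sub (c : ℤ) :
    v ∈ W.boundedDegree α ↔ ∀ᶠ n : ℤ in atTop, ∀ w, α (W.op v (c - n) w) = 0 := by
  rw [mem_boundedDegree_iff_exists_le, eventually_atTop]
  constructor
  · rintro ⟨k, hk⟩
    exact ⟨c - k, fun n hn => hk (c - n) (by lia)⟩
  · rintro ⟨N, hN⟩
    refine ⟨c - N, fun m hm => ?_⟩
    simpa using hN (c - m) (by lia)

theorem dmode_zero (n : ℤ) (w : W.carrier) : W.dmode 0 n α w = 0 := by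
  refine finsum_eq_zero_of_forall_eq_zero fun h => finsum_eq_zero_of_forall_eq_zero fun i => ?_
  rw [(V.proj_linear h).map_zero, Function.iterate_fixed (V.L_map_zero 1), W.zero_op, map_zero,
    mul_zero]

theorem dmode_of_mem_wtSpace (hv : v ∈ V.wtSpace h) (n : ℤ) (w : W.carrier) :
    W.dmode v n α w = ∑ᶠ i : ℕ, ((-1 : ℂ) ^ h / (Nat.factorial i : ℂ)) *
      α (W.op ((V.L 1)^[i] v) (2 * h - n - (i : ℤ) - 2) w) := by
  rw [dmode, finsum_eq_single _ h, V.proj_eq h v hv]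
  intro g hg
  refine finsum_eq_zero_of_forall_eq_zero fun i => ?_
  rw [V.proj_ne h g hg.symm v hv, Function.iterate_fixed (V.L_map_zero 1), W.zero_op, map_zero,
    mul_zero]

theorem dmode_eq_finsum_proj (v : V.carrier) (n : ℤ) (w : W.carrier) :
    W.dmode v n α w = ∑ᶠ h : ℤ, W.dmode (V.proj h v) n α w :=
  finsum_congr fun h => (dmode_of_mem_wtSpace (V.proj_mem h v) n w).symm

theorem eventually_op_iterate_L_one_eq_zero (hv : v ∈ V.wtSpace h)
    (hL : ∀ i : ℕ, i ≠ 0 → (V.L 1)^[i] v ∈ W.boundedDegree α) :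
    ∀ᶠ n : ℤ in atTop, ∀ i : ℕ, i ≠ 0 → ∀ w,
      α (W.op ((V.L 1)^[i] v) (2 * h - n - (i : ℤ) - 2) w) = 0 := by
  obtain ⟨B, hB⟩ := VOA.exists_iterate_L_eq_zero one_pos hv
  have hlt : ∀ᶠ n : ℤ in atTop, ∀ i ∈ Finset.range B, i ≠ 0 → ∀ w,
      α (W.op ((V.L 1)^[i] v) (2 * h - (i : ℤ) - 2 - n) w) = 0 :=
    (eventually_all_finset _).2 fun i _ => eventually_imp_distrib_left.2 fun hi =>
      (mem_boundedDegree_iff_eventually_sub _).1 (hL i hi)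
  filter_upwards [hlt] with n hn i hi w
  rcases lt_or_ge i B with hiB | hiB
  · rw [show 2 * h - n - (i : ℤ) - 2 = 2 * h - i - 2 - n by ring]
    exact hn i (Finset.mem_range.2 hiB) hi w
  · rw [hB i hiB, W.zero_op, map_zero]

theorem eventually_dmode_eq_leading_term (hv : v ∈ V.wtSpace h)
    (hL : ∀ i : ℕ, i ≠ 0 → (V.L 1)^[i] v ∈ W.boundedDegree α) :
    ∀ᶠ n : ℤ in atTop, ∀ w, W.dmode v n α w = (-1) ^ h * α (W.op v (2 * h - 2 - n) w) := by
  filter_upwards [eventually_op_iterate_L_one_eq_zero hv hL] with n hn w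
  rw [dmode_of_mem_wtSpace hv, finsum_eq_single _ 0 fun i hi => by rw [hn i hi w, mul_zero]]
  simp [sub_right_comm]

theorem mem_boundedDegree_iff_eventually_dmode_eq_zero (hv : v ∈ V.wtSpace h)
    (hL : ∀ i : ℕ, i ≠ 0 → (V.L 1)^[i] v ∈ W.boundedDegree α) :
    v ∈ W.boundedDegree α ↔ ∀ᶠ n : ℤ in atTop, ∀ w, W.dmode v n α w = 0 := by
  rw [mem_boundedDegree_iff_eventually_sub (2 * h - 2)]
  refine eventually_congr ?_
  filter_upwards [eventually_dmode_eq_leading_term hv hL] with n hn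
  simp [hn, zpow_ne_zero]

theorem coe_mem_DW_iff :
    ⇑α ∈ W.DW ↔ ∀ v, ∀ᶠ n : ℤ in atTop, ∀ w, W.dmode v n α w = 0 := by
  simp only [DW, Set.mem_ofPred_eq, α.isLinear, true_and, eventually_atTop]

theorem wtSpace_le_boundedDegree (hα : ⇑α ∈ W.DW) (h : ℤ) :
    V.wtSpace h ≤ W.boundedDegree α := by
  obtain ⟨N, hN⟩ := V.lower_trunc
  induction h using Int.strongRec (m := N) with
  | lt h hh => simp [hN h hh]
  | ge h _ ih =>
    intro v hv
    have hL (i : ℕ) (hi : i ≠ 0) : (V.L 1)^[i] v ∈ W.boundedDegree α :=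
      ih (h - i * 1) (by lia) (VOA.iterate_L_mem_wtSpace 1 hv i)
    exact (mem_boundedDegree_iff_eventually_dmode_eq_zero hv hL).2 (coe_mem_DW_iff.1 hα v)

theorem coe_mem_DW_of_boundedDegree_eq_top (hα : W.boundedDegree α = ⊤) : ⇑α ∈ W.DW := by
  refine coe_mem_DW_iff.2 fun v => ?_
  have hmem (u : V.carrier) : u ∈ W.boundedDegree α := hα ▸ Submodule.mem_top
  have hproj : ∀ᶠ n : ℤ in atTop, ∀ h ∈ Function.support fun h => V.proj h v, ∀ w,
      W.dmode (V.proj h v) n α w = 0 :=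
    (eventually_all_finite (V.proj_finite v)).2 fun h _ =>
      (mem_boundedDegree_iff_eventually_dmode_eq_zero (V.proj_mem h v) fun _ _ => hmem _).1
        (hmem _)
  filter_upwards [hproj] with n hn w
  rw [dmode_eq_finsum_proj]
  refine finsum_eq_zero_of_forall_eq_zero fun h => ?_
  by_cases hh : V.proj h v = 0
  · rw [hh, dmode_zero]
  · exact hn h hh w

theorem coe_mem_DW_iff_boundedDegree_eq_top : ⇑α ∈ W.DW ↔ W.boundedDegree α = ⊤ := by
  refine ⟨fun hα => ?_, coe_mem_DW_of_boundedDegree_eq_top⟩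
  rw [eq_top_iff, ← V.iSup_wtSpace]
  exact iSup_le (wtSpace_le_boundedDegree hα)

end WeakModule

/-- Characterization of `D(W)`: a linear functional `α ∈ W*` lies in
`D(W)` iff for every `v ∈ V` there is `k ∈ ℤ` with `vₘW ⊆ ker α` for all `m ≤ k`;
equivalently, iff for every `v ∈ V` there is `r ∈ ℤ` such that
`x^r ⟨α, Y(v,x)w⟩ ∈ ℂ[x⁻¹]` for all `w ∈ W` (the coefficient of `x^{r-m-1}` being
`⟨α, vₘw⟩`, this says `⟨α, vₘw⟩ = 0` whenever `r - m - 1 > 0`). -/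
theorem mem_DW_characterization (V : VOA) (W : WeakModule V)
    (α : W.carrier → ℂ) (hα : IsLinearMap ℂ α) :
    (α ∈ W.DW ↔
      ∀ v : V.carrier, ∃ k : ℤ, ∀ m : ℤ, m ≤ k → ∀ w : W.carrier, α (W.op v m w) = 0) ∧
    (α ∈ W.DW ↔
      ∀ v : V.carrier, ∃ r : ℤ, ∀ m : ℤ, 0 < r - m - 1 →
        ∀ w : W.carrier, α (W.op v m w) = 0) := by
  obtain ⟨α, rfl⟩ : ∃ β : Module.Dual ℂ W.carrier, ⇑β = α := ⟨hα.mk' α, rfl⟩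
  have key : ⇑α ∈ W.DW ↔ ∀ v, v ∈ W.boundedDegree α :=
    WeakModule.coe_mem_DW_iff_boundedDegree_eq_top.trans Submodule.eq_top_iff'
  exact ⟨key.trans (forall_congr' fun _ => WeakModule.mem_boundedDegree_iff_exists_le),
    key.trans (forall_congr' fun _ => WeakModule.mem_boundedDegree_iff_exists_pos)⟩
end
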